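/- For any even integer p ≥ 2, the equation dη̄/dū = 1/(η̄ + ū^p) has a solution η̄₀(ū) defined for all ū ≤ 0 satisfying −ū^p < η̄₀(ū) < −ū^p − K/ū^{p−1} for all ū < 0, for some constant K > 1/p; moreover η̄₀(ū) = −ū^p − (1/p) ū^{1−p} + O(ū^{2−3p}) as ū → −∞, and such a solution with η̄₀(ū) + ū^p → 0 as ū → −∞ is unique. -/

import Mathlib

open Set Filter Topology

/-!
In the variable `w = η + u ^ p` the equation reads `w' = 1 / w + F` with `F = p * u ^ (p - 1)`, and
`F → -∞` at `-∞`. As `x ↦ 1 / x` is decreasing on `(0, ∞)`, two positive solutions never drift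
apart, and a subsolution lies below a positive supersolution as soon as their difference tends to
`0` at `-∞`.

Existence: small constants are supersolutions far to the left, so the solutions started at `-n` with
value `1 / (n + 1)` are uniformly Cauchy on compact sets. The limit is taken in
`(w ^ 2)' = 2 + 2 * F * w`, which has no singularity at `w = 0` and shows that the limit has no
zeros.

Uniqueness is comparison, once every solution on `(-∞, 0)` is known to be positive.

The asymptotics is comparison with the supersolution `-1 / F` and the subsolution
`1 / (F' / F ^ 2 - F)`, which differ by `O(F' / F ^ 4) = O(u ^ (2 - 3 * p))`.
-/

section RealLine

theorem eventually_mem_Icc_natCast (u : ℝ) : ∀ᶠ n : ℕ in atTop, u ∈ Icc (-n : ℝ) n := by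
  filter_upwards [tendsto_natCast_atTop_atTop.eventually_ge_atTop |u|] with n hn
  exact abs_le.1 hn

theorem le_of_deriv_neg_of_eq {f : ℝ → ℝ} {a b c : ℝ}
    (hf : ∀ u ∈ Icc a b, DifferentiableAt ℝ f u) (ha : f a ≤ c)
    (hlevel : ∀ u ∈ Icc a b, f u = c → deriv f u < 0) :
    ∀ u ∈ Icc a b, f u ≤ c := by
  intro u hu
  exact image_le_of_deriv_right_lt_deriv_boundary' (B := fun _ ↦ c) (B' := fun _ ↦ 0)
    (fun x hx ↦ (hf x hx).continuousAt.continuousWithinAt)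
    (fun x hx ↦ (hf x (Ico_subset_Icc_self hx)).hasDerivAt.hasDerivWithinAt) ha
    continuousOn_const (fun x _ ↦ hasDerivWithinAt_const x _ c)
    (fun x hx ↦ hlevel x (Ico_subset_Icc_self hx)) hu

theorem exists_forall_hasDerivWithinAt_of_lipschitz_of_bounded {E : Type*}
    [NormedAddCommGroup E] [NormedSpace ℝ E] [CompleteSpace E] {f : ℝ → E → E} {t₀ tmin tmax : ℝ}
    {K L : NNReal} (ht₀ : t₀ ∈ Icc tmin tmax) (x₀ : E)
    (hlip : ∀ t ∈ Icc tmin tmax, LipschitzWith K (f t))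
    (hcont : ∀ x, ContinuousOn (f · x) (Icc tmin tmax))
    (hbound : ∀ t ∈ Icc tmin tmax, ∀ x, ‖f t x‖ ≤ L) :
    ∃ α : ℝ → E, α t₀ = x₀ ∧
      ∀ t ∈ Icc tmin tmax, HasDerivWithinAt α (f t (α t)) (Icc tmin tmax) t := by
  have hradius : 0 ≤ L * max (tmax - t₀) (t₀ - tmin) :=
    mul_nonneg L.coe_nonneg (le_max_of_le_left (sub_nonneg.2 ht₀.2))
  have hpl : IsPicardLindelof f ⟨t₀, ht₀⟩ x₀ ⟨_, hradius⟩ 0 L K :=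
    { lipschitzOnWith := fun t ht ↦ (hlip t ht).lipschitzOnWith
      continuousOn := fun x _ ↦ hcont x
      norm_le := fun t ht x _ ↦ hbound t ht x
      mul_max_le := (sub_zero _).ge }
  exact hpl.exists_eq_forall_mem_Icc_hasDerivWithinAt₀

theorem lipschitzWith_inv_max {δ : NNReal} (hδ : 0 < δ) :
    LipschitzWith (δ ^ 2)⁻¹ fun x : ℝ ↦ (max x δ)⁻¹ := by
  refine LipschitzWith.of_dist_le_mul fun x y ↦ ?_
  have hx : (δ : ℝ) ≤ max x δ := le_max_right x _
  have hy : (δ : ℝ) ≤ max y δ := le_max_right y _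
  have hδ' : (0 : ℝ) < δ := hδ
  have hx0 : 0 < max x δ := hδ'.trans_le hx
  have hy0 : 0 < max y δ := hδ'.trans_le hy
  calc dist (max x δ)⁻¹ (max y δ)⁻¹
      = (max x δ * max y δ)⁻¹ * |max x δ - max y δ| := by
        rw [Real.dist_eq, inv_sub_inv hx0.ne' hy0.ne', abs_div, abs_of_pos (mul_pos hx0 hy0),
          abs_sub_comm, div_eq_inv_mul]
    _ ≤ (δ * δ : ℝ)⁻¹ * |x - y| := by
        gcongr ?_⁻¹ * ?_
        · exact mul_le_mul hx hy hδ'.le hx0.le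
        · exact abs_max_sub_max_le_abs x y δ
    _ = ↑(δ ^ 2)⁻¹ * dist x y := by rw [Real.dist_eq]; push_cast; rw [sq]

end RealLine

namespace ReciprocalODE

/-- `w` solves `w' = 1 / w + F` at every point of `s`, with a two-sided derivative. As `0⁻¹ = 0`,
this does not by itself force `w` to be nonzero. -/
def IsSolutionOn (F w : ℝ → ℝ) (s : Set ℝ) : Prop :=
  ∀ u ∈ s, HasDerivAt w ((w u)⁻¹ + F u) u

/-- `v` is a differentiable subsolution of `v' = 1 / v + F` on `s`: a lower barrier for the
comparison principle. Differentiability is a separate clause since `deriv` is `0` without it. -/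
def IsSubsolutionOn (F v : ℝ → ℝ) (s : Set ℝ) : Prop :=
  ∀ u ∈ s, DifferentiableAt ℝ v u ∧ deriv v u ≤ (v u)⁻¹ + F u

/-- `w` is a differentiable supersolution of `w' = 1 / w + F` on `s`: an upper barrier for the
comparison principle. -/
def IsSupersolutionOn (F w : ℝ → ℝ) (s : Set ℝ) : Prop :=
  ∀ u ∈ s, DifferentiableAt ℝ w u ∧ (w u)⁻¹ + F u ≤ deriv w u

variable {F v w : ℝ → ℝ} {s t : Set ℝ} {a b c : ℝ}

theorem IsSolutionOn.mono (hw : IsSolutionOn F w t) (hst : s ⊆ t) : IsSolutionOn F w s :=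
  fun u hu ↦ hw u (hst hu)

theorem IsSubsolutionOn.mono (hv : IsSubsolutionOn F v t) (hst : s ⊆ t) : IsSubsolutionOn F v s :=
  fun u hu ↦ hv u (hst hu)

theorem IsSupersolutionOn.mono (hw : IsSupersolutionOn F w t) (hst : s ⊆ t) :
    IsSupersolutionOn F w s :=
  fun u hu ↦ hw u (hst hu)

theorem IsSolutionOn.isSubsolutionOn (hw : IsSolutionOn F w s) : IsSubsolutionOn F w s :=
  fun u hu ↦ ⟨(hw u hu).differentiableAt, (hw u hu).deriv.le⟩

theorem IsSolutionOn.isSupersolutionOn (hw : IsSolutionOn F w s) : IsSupersolutionOn F w s :=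
  fun u hu ↦ ⟨(hw u hu).differentiableAt, (hw u hu).deriv.ge⟩

theorem IsSolutionOn.continuousOn (hw : IsSolutionOn F w s) : ContinuousOn w s :=
  fun u hu ↦ (hw u hu).continuousAt.continuousWithinAt

-- Where `v - w` is positive, it decreases, since `x ↦ x⁻¹` is decreasing on `(0, ∞)`.
theorem IsSubsolutionOn.sub_le_of_sub_le (hv : IsSubsolutionOn F v (Icc a b))
    (hw : IsSupersolutionOn F w (Icc a b)) (hwpos : ∀ u ∈ Icc a b, 0 < w u) (hc : 0 ≤ c)
    (ha : v a - w a ≤ c) : ∀ u ∈ Icc a b, v u - w u ≤ c := by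
  intro u hu
  refine le_of_forall_gt_imp_ge_of_dense fun c' hc' ↦ ?_
  refine le_of_deriv_neg_of_eq (f := v - w) (fun x hx ↦ (hv x hx).1.sub (hw x hx).1)
    (ha.trans hc'.le) (fun x hx hlevel ↦ ?_) u hu
  have hwv : w x < v x := sub_pos.1 (hlevel ▸ hc.trans_lt hc' : 0 < (v - w) x)
  have hinv : (v x)⁻¹ < (w x)⁻¹ := (inv_lt_inv₀ ((hwpos x hx).trans hwv) (hwpos x hx)).2 hwv
  rw [deriv_sub (hv x hx).1 (hw x hx).1]
  linarith [(hv x hx).2, (hw x hx).2]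

theorem IsSolutionOn.abs_sub_le_of_abs_sub_le (hv : IsSolutionOn F v (Icc a b))
    (hw : IsSolutionOn F w (Icc a b)) (hvpos : ∀ u ∈ Icc a b, 0 < v u)
    (hwpos : ∀ u ∈ Icc a b, 0 < w u) (ha : |v a - w a| ≤ c) :
    ∀ u ∈ Icc a b, |v u - w u| ≤ c := by
  intro u hu
  have hc : 0 ≤ c := (abs_nonneg _).trans ha
  rw [abs_sub_le_iff] at ha ⊢
  exact ⟨hv.isSubsolutionOn.sub_le_of_sub_le hw.isSupersolutionOn hwpos hc ha.1 u hu,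
    hw.isSubsolutionOn.sub_le_of_sub_le hv.isSupersolutionOn hvpos hc ha.2 u hu⟩

theorem IsSubsolutionOn.le_of_tendsto_sub (hv : IsSubsolutionOn F v (Iio b))
    (hw : IsSupersolutionOn F w (Iio b)) (hwpos : ∀ u < b, 0 < w u)
    (hlim : Tendsto (fun u ↦ v u - w u) atBot (𝓝 0)) : ∀ u < b, v u ≤ w u := by
  intro u hu
  refine sub_nonpos.1 (le_of_forall_pos_le_add fun ε hε ↦ ?_)
  obtain ⟨a, hau, ha⟩ :=
    ((eventually_le_atBot u).and (hlim.eventually_lt_const hε)).exists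
  have hsub : Icc a u ⊆ Iio b := fun x hx ↦ hx.2.trans_lt hu
  rw [zero_add]
  exact (hv.mono hsub).sub_le_of_sub_le (hw.mono hsub) (fun x hx ↦ hwpos x (hsub hx)) hε.le ha.le
    u ⟨hau, le_rfl⟩

theorem exists_hasDerivAt_inv_max_add (hF : Continuous F) {δ : NNReal} (hδ : 0 < δ) (hab : a ≤ b)
    (x₀ : ℝ) :
    ∃ w : ℝ → ℝ, w a = x₀ ∧ ∀ u ∈ Icc a b, HasDerivAt w ((max (w u) δ)⁻¹ + F u) u := by
  obtain ⟨M, hM⟩ := isCompact_Icc.exists_bound_of_continuousOn (s := Icc (a - 1) (b + 1))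
    hF.continuousOn
  have hlip (u : ℝ) : LipschitzWith (δ ^ 2)⁻¹ fun x : ℝ ↦ (max x δ)⁻¹ + F u := by
    simpa only [add_zero] using (lipschitzWith_inv_max hδ).add (LipschitzWith.const (F u))
  have hbound : ∀ u ∈ Icc (a - 1) (b + 1), ∀ x : ℝ,
      ‖(max x δ)⁻¹ + F u‖ ≤ (δ⁻¹ + M.toNNReal : NNReal) := by
    intro u hu x
    refine norm_add_le_of_le ?_ ((hM u hu).trans (Real.le_coe_toNNReal M))
    rw [norm_inv, Real.norm_of_nonneg (le_max_of_le_right δ.coe_nonneg)]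
    exact inv_anti₀ (NNReal.coe_pos.2 hδ) (le_max_right x _)
  obtain ⟨w, hwa, hw⟩ := exists_forall_hasDerivWithinAt_of_lipschitz_of_bounded
    (t₀ := a) ⟨by linarith, by linarith⟩ x₀ (fun u _ ↦ hlip u) (fun x ↦ by fun_prop) hbound
  refine ⟨w, hwa, fun u hu ↦ ?_⟩
  have hnhds : Icc (a - 1) (b + 1) ∈ 𝓝 u := Icc_mem_nhds (by linarith [hu.1]) (by linarith [hu.2])
  exact (hw u (mem_of_mem_nhds hnhds)).hasDerivAt hnhds

-- A small constant level `δ` repels solutions, so they never meet the truncation at `δ`.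
theorem exists_pos_isSolutionOn_Icc (hF : Continuous F) {x₀ : ℝ} (hab : a ≤ b) (hx₀ : 0 < x₀) :
    ∃ w : ℝ → ℝ, w a = x₀ ∧ IsSolutionOn F w (Icc a b) ∧ ∀ u ∈ Icc a b, 0 < w u := by
  obtain ⟨M, hM⟩ := isCompact_Icc.exists_bound_of_continuousOn (s := Icc a b) hF.continuousOn
  have hM0 : 0 ≤ M := (norm_nonneg _).trans (hM a (left_mem_Icc.2 hab))
  obtain ⟨δ, hδ, hδx₀, hδM⟩ : ∃ δ : NNReal, 0 < δ ∧ δ ≤ x₀ ∧ δ ≤ (M + 1)⁻¹ := by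
    have hpos : 0 < min x₀ (M + 1)⁻¹ := lt_min hx₀ (by positivity)
    exact ⟨⟨_, hpos.le⟩, hpos, min_le_left _ _, min_le_right _ _⟩
  have hMδ : M + 1 ≤ (δ : ℝ)⁻¹ := (le_inv_comm₀ (NNReal.coe_pos.2 hδ) (by positivity)).1 hδM
  obtain ⟨w, hwa, hw⟩ := exists_hasDerivAt_inv_max_add hF hδ hab x₀
  have hδw : ∀ u ∈ Icc a b, (δ : ℝ) ≤ w u := by
    intro u hu
    refine neg_le_neg_iff.1 (le_of_deriv_neg_of_eq (f := -w)
      (fun x hx ↦ (hw x hx).differentiableAt.neg) (by simpa [hwa]) (fun x hx hlevel ↦ ?_) u hu)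
    have hwx : w x = δ := neg_inj.1 hlevel
    rw [(hw x hx).neg.deriv, hwx, max_self]
    linarith [(abs_le.1 (hM x hx)).1]
  refine ⟨w, hwa, fun u hu ↦ ?_, fun u hu ↦ (NNReal.coe_pos.2 hδ).trans_le (hδw u hu)⟩
  simpa only [max_eq_left (hδw u hu)] using hw u hu

section Existence

variable {W : ℕ → ℝ → ℝ}

-- Any level `ε` is a supersolution as soon as `F ≤ -ε⁻¹`.
theorem eventually_atBot_forall_le (hF : Tendsto F atBot atBot) {ε : ℝ} (hε : 0 < ε) :
    ∀ᶠ b in atBot, ∀ v a, IsSubsolutionOn F v (Icc a b) → v a ≤ ε → ∀ u ∈ Icc a b, v u ≤ ε := by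
  obtain ⟨R, hR⟩ := eventually_atBot.1 (hF.eventually_le_atBot (-ε⁻¹))
  filter_upwards [eventually_le_atBot R] with b hb v a hv ha u hu
  have hsuper : IsSupersolutionOn F (fun _ ↦ ε) (Icc a b) := fun x hx ↦
    ⟨differentiableAt_const ε, by
      rw [deriv_const]
      linarith [hR x (hx.2.trans hb)]⟩
  exact sub_nonpos.1
    (hv.sub_le_of_sub_le hsuper (fun _ _ ↦ hε) le_rfl (sub_nonpos.2 ha) u hu)

/-- Positive solutions `W n` on `[-n, n]` whose initial values `W n (-n)` tend to `0`; their limit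
is the solution that vanishes at `-∞`. The values of `W n` outside `[-n, n]` are irrelevant. -/
structure IsApproximatingSequence (F : ℝ → ℝ) (W : ℕ → ℝ → ℝ) : Prop where
  isSolutionOn : ∀ n : ℕ, IsSolutionOn F (W n) (Icc (-n) n)
  pos : ∀ n : ℕ, ∀ u ∈ Icc (-n : ℝ) n, 0 < W n u
  tendsto_left : Tendsto (fun n : ℕ ↦ W n (-n)) atTop (𝓝 0)

theorem exists_isApproximatingSequence (hF : Continuous F) : ∃ W, IsApproximatingSequence F W := by
  have hn (n : ℕ) : (-n : ℝ) ≤ n := neg_le_self n.cast_nonneg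
  choose W hleft hsol hpos using fun n : ℕ ↦
    exists_pos_isSolutionOn_Icc hF (hn n) (Nat.one_div_pos_of_nat (α := ℝ) (n := n))
  refine ⟨W, hsol, hpos, ?_⟩
  simpa only [hleft] using tendsto_one_div_add_atTop_nhds_zero_nat

namespace IsApproximatingSequence

theorem exists_forall_le (hW : IsApproximatingSequence F W) (hF : Tendsto F atBot atBot)
    {ε : ℝ} (hε : 0 < ε) :
    ∃ N : ℕ, ∀ n ≥ N, ∀ u ∈ Icc (-n : ℝ) (-N), W n u ≤ ε := by
  have hleft := hW.tendsto_left.eventually_le_const hε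
  have hneg : Tendsto (fun N : ℕ ↦ (-N : ℝ)) atTop atBot :=
    tendsto_neg_atTop_atBot.comp tendsto_natCast_atTop_atTop
  obtain ⟨N, hNleft, hNle⟩ := ((eventually_forall_ge_atTop.2 hleft).and
    (hneg.eventually (eventually_atBot_forall_le hF hε))).exists
  refine ⟨N, fun n hn ↦ hNle (W n) (-n) ?_ (hNleft n hn)⟩
  have hNn : (-N : ℝ) ≤ n := by linarith [N.cast_nonneg (α := ℝ), n.cast_nonneg (α := ℝ)]
  exact ((hW.isSolutionOn n).mono (Icc_subset_Icc_right hNn)).isSubsolutionOn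

-- The two solutions are `ε`-close at the left end `-n`, and solutions do not drift apart.
theorem exists_forall_abs_sub_le (hW : IsApproximatingSequence F W) (hF : Tendsto F atBot atBot)
    {ε : ℝ} (hε : 0 < ε) :
    ∃ N : ℕ, ∀ n ≥ N, ∀ k ≥ n, ∀ u ∈ Icc (-n : ℝ) n, |W k u - W n u| ≤ ε := by
  obtain ⟨N, hN⟩ := hW.exists_forall_le hF hε
  refine ⟨N, fun n hn k hk ↦ ?_⟩
  have hNn : (N : ℝ) ≤ n := by exact_mod_cast hn
  have hnk : (n : ℝ) ≤ k := by exact_mod_cast hk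
  have hsub : Icc (-n : ℝ) n ⊆ Icc (-k) k := Icc_subset_Icc (by linarith) hnk
  have hmem : (-n : ℝ) ∈ Icc (-n : ℝ) n := left_mem_Icc.2 (neg_le_self n.cast_nonneg)
  refine ((hW.isSolutionOn k).mono hsub).abs_sub_le_of_abs_sub_le (hW.isSolutionOn n)
    (fun u hu ↦ hW.pos k u (hsub hu)) (hW.pos n) ?_
  rw [abs_sub_le_iff]
  constructor
  · linarith [hN k (hn.trans hk) (-n) ⟨by linarith, by linarith⟩, hW.pos n _ hmem]
  · linarith [hN n hn (-n) ⟨le_rfl, by linarith⟩, hW.pos k _ (hsub hmem)]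

theorem uniformCauchySeqOn_Icc (hW : IsApproximatingSequence F W) (hF : Tendsto F atBot atBot)
    (m : ℕ) : UniformCauchySeqOn W atTop (Icc (-m) m) := by
  refine Metric.uniformCauchySeqOn_iff.2 fun ε hε ↦ ?_
  obtain ⟨N, hN⟩ := hW.exists_forall_abs_sub_le hF (show 0 < ε / 3 by positivity)
  have hclose : ∀ k ≥ max N m, ∀ u ∈ Icc (-m : ℝ) m, |W k u - W (max N m) u| ≤ ε / 3 := by
    intro k hk u hu
    have hm : (m : ℝ) ≤ max N m := by exact_mod_cast le_max_right N m
    exact hN _ (le_max_left N m) k hk u ⟨by linarith [hu.1], hu.2.trans hm⟩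
  refine ⟨max N m, fun k hk n hn u hu ↦ ?_⟩
  have hdist := dist_triangle_right (W k u) (W n u) (W (max N m) u)
  rw [Real.dist_eq (W k u) (W (max N m) u), Real.dist_eq (W n u)] at hdist
  linarith [hclose k hk u hu, hclose n hn u hu]

theorem exists_tendstoLocallyUniformly (hW : IsApproximatingSequence F W)
    (hF : Tendsto F atBot atBot) : ∃ w, TendstoLocallyUniformly W w atTop := by
  have hmem (u : ℝ) : ∃ m : ℕ, Icc (-m : ℝ) m ∈ 𝓝 u := by
    obtain ⟨m, hm⟩ := exists_nat_gt |u|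
    exact ⟨m, Icc_mem_nhds (abs_lt.1 hm).1 (abs_lt.1 hm).2⟩
  have hpointwise (u : ℝ) : ∃ l, Tendsto (W · u) atTop (𝓝 l) := by
    obtain ⟨m, hm⟩ := hmem u
    exact cauchySeq_tendsto_of_complete
      ((hW.uniformCauchySeqOn_Icc hF m).cauchySeq (mem_of_mem_nhds hm))
  choose w hw using hpointwise
  refine ⟨w, fun U hU u ↦ ?_⟩
  obtain ⟨m, hm⟩ := hmem u
  exact ⟨_, hm,
    (hW.uniformCauchySeqOn_Icc hF m).tendstoUniformlyOn_of_tendsto (fun x _ ↦ hw x) U hU⟩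

theorem nonneg_of_tendsto (hW : IsApproximatingSequence F W) {u l : ℝ}
    (hl : Tendsto (W · u) atTop (𝓝 l)) : 0 ≤ l :=
  ge_of_tendsto hl ((eventually_mem_Icc_natCast u).mono fun n hn ↦ (hW.pos n u hn).le)

theorem tendsto_atBot_zero (hW : IsApproximatingSequence F W) (hF : Tendsto F atBot atBot)
    (hw : ∀ u, Tendsto (W · u) atTop (𝓝 (w u))) : Tendsto w atBot (𝓝 0) := by
  refine tendsto_order.2 ⟨fun ε hε ↦ .of_forall fun u ↦
    hε.trans_le (hW.nonneg_of_tendsto (hw u)), fun ε hε ↦ ?_⟩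
  obtain ⟨N, hN⟩ := hW.exists_forall_le hF (half_pos hε)
  filter_upwards [eventually_le_atBot (-N : ℝ)] with u hu
  refine (le_of_tendsto (hw u) ?_).trans_lt (half_lt_self hε)
  filter_upwards [eventually_ge_atTop N, eventually_mem_Icc_natCast u] with n hn hun
  exact hN n hn u ⟨hun.1, hu⟩

end IsApproximatingSequence

theorem IsSolutionOn.hasDerivAt_sq (hw : IsSolutionOn F w s) {u : ℝ} (hu : u ∈ s) (h0 : w u ≠ 0) :
    HasDerivAt (w ^ 2) (2 + 2 * (F u * w u)) u := by
  refine ((hw u hu).pow 2).congr_deriv ?_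
  field_simp
  ring

theorem IsApproximatingSequence.eventually_isSolutionOn (hW : IsApproximatingSequence F W)
    (m : ℕ) :
    ∀ᶠ n : ℕ in atTop, IsSolutionOn F (W n) (Ioo (-m) m) ∧ ∀ u ∈ Ioo (-m : ℝ) m, 0 < W n u := by
  filter_upwards [eventually_ge_atTop m] with n hn
  have hmn : (m : ℝ) ≤ n := by exact_mod_cast hn
  have hsub : Ioo (-m : ℝ) m ⊆ Icc (-n) n :=
    Ioo_subset_Icc_self.trans (Icc_subset_Icc (neg_le_neg hmn) hmn)
  exact ⟨(hW.isSolutionOn n).mono hsub, fun u hu ↦ hW.pos n u (hsub hu)⟩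

theorem hasDerivAt_sq_of_tendstoLocallyUniformlyOn (hs : IsOpen s) (hF : ContinuousOn F s)
    (hW : ∀ᶠ n in atTop, IsSolutionOn F (W n) s ∧ ∀ u ∈ s, 0 < W n u)
    (hw : TendstoLocallyUniformlyOn W w atTop s) {u : ℝ} (hu : u ∈ s) :
    HasDerivAt (w ^ 2) (2 + 2 * (F u * w u)) u := by
  have hcont : ContinuousOn w s := hw.continuousOn (hW.mono fun n hn ↦ hn.1.continuousOn).frequently
  have hFF : TendstoLocallyUniformlyOn (fun _ : ℕ ↦ F) F atTop s := fun U hU x _ ↦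
    ⟨univ, univ_mem, .of_forall fun _ _ _ ↦ refl_mem_uniformity hU⟩
  have hFw := hFF.fun_mul₀ hw hF hcont
  have hderiv : TendstoLocallyUniformlyOn (fun n x ↦ 2 + 2 * (F x * W n x))
      (fun x ↦ 2 + 2 * (F x * w x)) atTop s :=
    (show UniformContinuous fun y : ℝ ↦ 2 + 2 * y by fun_prop).comp_tendstoLocallyUniformlyOn hFw
  refine hasDerivAt_of_tendstoLocallyUniformlyOn hs hderiv (f := fun n ↦ W n ^ 2) ?_
    (fun x hx ↦ (hw.tendsto_at hx).pow 2) hu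
  filter_upwards [hW] with n hn x hx
  exact hn.1.hasDerivAt_sq hx (hn.2 x hx).ne'

end Existence

-- At a zero of `w`, `w ^ 2` would have a minimum with derivative `2`.
theorem pos_of_hasDerivAt_sq (hw0 : ∀ u, 0 ≤ w u)
    (hw : ∀ u, HasDerivAt (w ^ 2) (2 + 2 * (F u * w u)) u) (u : ℝ) : 0 < w u := by
  refine (hw0 u).lt_of_ne' fun hu ↦ ?_
  have hmin : IsLocalMin (w ^ 2) u := .of_forall fun x ↦ by simp [hu, sq_nonneg]
  have hzero := hmin.hasDerivAt_eq_zero (hw u)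
  rw [hu, mul_zero, mul_zero, add_zero] at hzero
  exact two_ne_zero hzero

theorem isSolutionOn_univ_of_hasDerivAt_sq (hwpos : ∀ u, 0 < w u)
    (hw : ∀ u, HasDerivAt (w ^ 2) (2 + 2 * (F u * w u)) u) : IsSolutionOn F w univ := by
  intro u _
  have hsqrt : w = fun x ↦ √((w ^ 2) x) := by
    ext x
    exact (Real.sqrt_sq (hwpos x).le).symm
  have hderiv := (hw u).sqrt (pow_ne_zero 2 (hwpos u).ne')
  rw [← hsqrt, Pi.pow_apply, Real.sqrt_sq (hwpos u).le] at hderiv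
  refine hderiv.congr_deriv ?_
  have := (hwpos u).ne'
  field_simp

theorem exists_pos_isSolutionOn_univ_tendsto_zero (hFc : Continuous F)
    (hF : Tendsto F atBot atBot) :
    ∃ w : ℝ → ℝ, IsSolutionOn F w univ ∧ (∀ u, 0 < w u) ∧ Tendsto w atBot (𝓝 0) := by
  obtain ⟨W, hW⟩ := exists_isApproximatingSequence hFc
  obtain ⟨w, hw⟩ := hW.exists_tendstoLocallyUniformly hF
  have hlim (u : ℝ) : Tendsto (W · u) atTop (𝓝 (w u)) :=
    hw.tendstoLocallyUniformlyOn.tendsto_at (mem_univ u)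
  have hsq (u : ℝ) : HasDerivAt (w ^ 2) (2 + 2 * (F u * w u)) u := by
    obtain ⟨m, hm⟩ := exists_nat_gt |u|
    exact hasDerivAt_sq_of_tendstoLocallyUniformlyOn isOpen_Ioo hFc.continuousOn
      (hW.eventually_isSolutionOn m) hw.tendstoLocallyUniformlyOn (abs_lt.1 hm)
  have hpos := pos_of_hasDerivAt_sq (fun u ↦ hW.nonneg_of_tendsto (hlim u)) hsq
  exact ⟨w, isSolutionOn_univ_of_hasDerivAt_sq hpos hsq, hpos, hW.tendsto_atBot_zero hF hlim⟩

section Uniqueness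

-- Near a zero the derivative `(w u)⁻¹ + F u` would be unbounded; since `0⁻¹ = 0`, the
-- equation itself does not exclude zeros.
theorem IsSolutionOn.ne_zero_of_neg (hw : IsSolutionOn F w (Iio b)) (hF : ContinuousOn F (Iio b))
    (hFneg : ∀ u < b, F u < 0) : ∀ u < b, w u ≠ 0 := by
  intro z hz hwz
  have hderivz : deriv w z < 0 := by
    rw [(hw z hz).deriv, hwz, inv_zero, zero_add]
    exact hFneg z hz
  have hwpos : ∀ᶠ u in 𝓝[<] z, w u ∈ Ioi 0 := by
    filter_upwards [nhdsWithin_le_nhds (eventually_nhdsWithin_sign_eq_of_deriv_neg hderivz hwz),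
      self_mem_nhdsWithin] with u hu huz
    rwa [sign_pos (sub_pos.2 huz), sign_eq_one_iff] at hu
  have hw0 : Tendsto w (𝓝[<] z) (𝓝[>] 0) := by
    have hcont := (hw z hz).continuousAt.tendsto
    rw [hwz] at hcont
    exact tendsto_nhdsWithin_iff.2 ⟨hcont.mono_left nhdsWithin_le_nhds, hwpos⟩
  have hFz : Tendsto F (𝓝[<] z) (𝓝 (F z)) :=
    (hF.continuousAt (Iio_mem_nhds hz)).tendsto.mono_left nhdsWithin_le_nhds
  have hderiv : Tendsto (deriv w) (𝓝[<] z) atTop := by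
    refine ((tendsto_inv_nhdsGT_zero.comp hw0).atTop_add hFz).congr' ?_
    filter_upwards [self_mem_nhdsWithin] with u hu
    exact (hw u (hu.trans hz)).deriv.symm
  exact not_differentiableWithinAt_of_deriv_tendsto_atTop_Iio w hderiv
    (hw z hz).differentiableAt.differentiableWithinAt

-- On a half-line where `w < 0`, the derivative of `w ^ 2` is at least `2`.
theorem IsSolutionOn.exists_nonneg (hw : IsSolutionOn F w (Iic c)) (hF : ∀ u ≤ c, F u ≤ 0) :
    ∃ u ≤ c, 0 ≤ w u := by
  by_contra! hneg
  have hderiv : ∀ u ≤ c, HasDerivAt (fun x ↦ (w ^ 2) x - 2 * x) (2 * (F u * w u)) u := by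
    intro u hu
    refine ((hw.hasDerivAt_sq hu (hneg u hu).ne).sub ((hasDerivAt_id u).const_mul 2)).congr_deriv ?_
    ring
  have hmono : MonotoneOn (fun x ↦ (w ^ 2) x - 2 * x) (Iic c) := by
    refine monotoneOn_of_hasDerivWithinAt_nonneg (convex_Iic c)
      (fun u hu ↦ (hderiv u hu).continuousAt.continuousWithinAt)
      (fun u hu ↦ (hderiv u (mem_Iic.1 (interior_subset hu))).hasDerivWithinAt) fun u hu ↦ ?_
    have hu' : u ≤ c := mem_Iic.1 (interior_subset hu)
    have := mul_nonneg_of_nonpos_of_nonpos (hF u hu') (hneg u hu').le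
    positivity
  have hle : c - (w c) ^ 2 ≤ c := sub_le_self c (sq_nonneg _)
  have := hmono hle self_mem_Iic hle
  simp only [Pi.pow_apply] at this
  nlinarith [hneg c le_rfl, sq_nonneg (w (c - (w c) ^ 2))]

theorem IsSolutionOn.pos_of_neg (hw : IsSolutionOn F w (Iio b)) (hF : ContinuousOn F (Iio b))
    (hFneg : ∀ u < b, F u < 0) : ∀ u < b, 0 < w u := by
  intro c hc
  have hsub : Iic c ⊆ Iio b := Iic_subset_Iio.2 hc
  obtain ⟨u, huc, hu⟩ := (hw.mono hsub).exists_nonneg fun x hx ↦ (hFneg x (hsub hx)).le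
  by_contra! hneg
  obtain ⟨z, hz, hwz⟩ := intermediate_value_Icc' huc
    (hw.continuousOn.mono (Icc_subset_Iic_self.trans hsub)) ⟨hneg, hu⟩
  exact hw.ne_zero_of_neg hF hFneg z (hsub hz.2) hwz

theorem IsSolutionOn.eqOn_Iic_of_tendsto_zero (hv : IsSolutionOn F v (Iic b))
    (hw : IsSolutionOn F w (Iic b)) (hF : ContinuousOn F (Iio b)) (hFneg : ∀ u < b, F u < 0)
    (hv0 : Tendsto v atBot (𝓝 0)) (hw0 : Tendsto w atBot (𝓝 0)) : EqOn v w (Iic b) := by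
  have hv' := hv.mono Iio_subset_Iic_self
  have hw' := hw.mono Iio_subset_Iic_self
  have heq : EqOn v w (Iio b) := fun u hu ↦ le_antisymm
    (hv'.isSubsolutionOn.le_of_tendsto_sub hw'.isSupersolutionOn (hw'.pos_of_neg hF hFneg)
      (by simpa using hv0.sub hw0) u hu)
    (hw'.isSubsolutionOn.le_of_tendsto_sub hv'.isSupersolutionOn (hv'.pos_of_neg hF hFneg)
      (by simpa using hw0.sub hv0) u hu)
  exact heq.of_subset_closure hv.continuousOn hw.continuousOn Iio_subset_Iic_self
    (closure_Iio b).ge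

end Uniqueness

section Barriers

variable {F' g g' : ℝ → ℝ}

theorem isSupersolutionOn_neg_inv (hF : ∀ u ∈ s, F u < 0) (hF' : ∀ u ∈ s, HasDerivAt F (F' u) u)
    (hF'nonneg : ∀ u ∈ s, 0 ≤ F' u) : IsSupersolutionOn F (fun u ↦ -(F u)⁻¹) s := by
  intro u hu
  have hderiv := ((hF' u hu).fun_inv (hF u hu).ne).fun_neg
  refine ⟨hderiv.differentiableAt, ?_⟩
  rw [hderiv.deriv, inv_neg, inv_inv, neg_add_cancel, neg_div, neg_neg]
  have := hF'nonneg u hu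
  positivity

-- For `v = (g - F)⁻¹` the right-hand side `v⁻¹ + F` is exactly `g`, and the least admissible `g`,
-- namely `F' / F ^ 2`, is the derivative of the leading approximation `-F⁻¹`.
theorem isSubsolutionOn_inv_sub (hF : ∀ u ∈ s, F u < 0) (hF' : ∀ u ∈ s, HasDerivAt F (F' u) u)
    (hg : ∀ u ∈ s, 0 ≤ g u) (hg' : ∀ u ∈ s, HasDerivAt g (g' u) u)
    (hg'nonneg : ∀ u ∈ s, 0 ≤ g' u) (hF'g : ∀ u ∈ s, F' u ≤ g u * F u ^ 2) :
    IsSubsolutionOn F (fun u ↦ (g u - F u)⁻¹) s := by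
  intro u hu
  have hpos : 0 < g u - F u := by linarith [hF u hu, hg u hu]
  have hderiv := ((hg' u hu).fun_sub (hF' u hu)).fun_inv hpos.ne'
  refine ⟨hderiv.differentiableAt, ?_⟩
  rw [hderiv.deriv, inv_inv, sub_add_cancel, div_le_iff₀ (by positivity)]
  calc -(g' u - F' u) ≤ F' u := by linarith [hg'nonneg u hu]
    _ ≤ g u * F u ^ 2 := hF'g u hu
    _ ≤ g u * (g u - F u) ^ 2 := by
      refine mul_le_mul_of_nonneg_left ?_ (hg u hu)
      nlinarith [hF u hu, hg u hu]

theorem neg_inv_sub_div_sq_le_inv_sub {x y : ℝ} (hx : x < 0) (hy : 0 ≤ y) :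
    -x⁻¹ - y / x ^ 2 ≤ (y - x)⁻¹ := by
  have hpos : 0 < y - x := by linarith
  rw [← one_div (y - x), le_div_iff₀ hpos]
  have : (-x⁻¹ - y / x ^ 2) * (y - x) = 1 - y ^ 2 / x ^ 2 := by
    field_simp [hx.ne]
    ring
  rw [this]
  exact sub_le_self 1 (by positivity)

theorem IsSolutionOn.le_neg_inv (hw : IsSolutionOn F w (Iio b)) (hw0 : Tendsto w atBot (𝓝 0))
    (hFlim : Tendsto F atBot atBot) (hF : ∀ u < b, F u < 0)
    (hF' : ∀ u < b, HasDerivAt F (F' u) u) (hF'nonneg : ∀ u < b, 0 ≤ F' u) :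
    ∀ u < b, w u ≤ -(F u)⁻¹ :=
  hw.isSubsolutionOn.le_of_tendsto_sub (isSupersolutionOn_neg_inv hF hF' hF'nonneg)
    (fun u hu ↦ neg_pos.2 (inv_lt_zero.2 (hF u hu)))
    (by simpa using hw0.sub (tendsto_inv_atBot_zero.comp hFlim).neg)

theorem IsSolutionOn.neg_inv_sub_div_sq_le (hw : IsSolutionOn F w (Iio b))
    (hw0 : Tendsto w atBot (𝓝 0))
    (hFlim : Tendsto F atBot atBot) (hF : ∀ u < b, F u < 0)
    (hF' : ∀ u < b, HasDerivAt F (F' u) u) (hg : ∀ u < b, 0 ≤ g u)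
    (hg' : ∀ u < b, HasDerivAt g (g' u) u) (hg'nonneg : ∀ u < b, 0 ≤ g' u)
    (hF'g : ∀ u < b, F' u ≤ g u * F u ^ 2) :
    ∀ u < b, -(F u)⁻¹ - g u / F u ^ 2 ≤ w u := by
  have hwpos : ∀ u < b, 0 < w u :=
    hw.pos_of_neg (fun u hu ↦ (hF' u hu).continuousAt.continuousWithinAt) hF
  have hsub := isSubsolutionOn_inv_sub hF hF' hg hg' hg'nonneg hF'g
  have hinv0 : Tendsto (fun u ↦ (g u - F u)⁻¹) atBot (𝓝 0) := by
    refine tendsto_inv_atTop_zero.comp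
      (tendsto_atTop_mono' atBot ?_ (tendsto_neg_atBot_atTop.comp hFlim))
    filter_upwards [eventually_lt_atBot b] with u hu
    simpa [sub_eq_add_neg] using hg u hu
  intro u hu
  exact (neg_inv_sub_div_sq_le_inv_sub (hF u hu) (hg u hu)).trans
    (hsub.le_of_tendsto_sub hw.isSupersolutionOn hwpos (by simpa using hinv0.sub hw0) u hu)

end Barriers

section PowForcing

variable {p : ℕ}

/-- The derivative of `u ↦ u ^ p`: the term `F` for which `w = η + u ^ p` solves `w' = 1 / w + F`
exactly when `η' = 1 / (η + u ^ p)`. -/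
def powForcing (p : ℕ) (u : ℝ) : ℝ :=
  p * u ^ (p - 1)

theorem continuous_powForcing (p : ℕ) : Continuous (powForcing p) := by
  unfold powForcing
  fun_prop

theorem odd_pred_of_even (hp : Even p) (hp0 : p ≠ 0) : Odd (p - 1) :=
  Nat.Even.sub_odd (Nat.one_le_iff_ne_zero.2 hp0) hp odd_one

theorem powForcing_neg (hp : Even p) (hp0 : p ≠ 0) {u : ℝ} (hu : u < 0) : powForcing p u < 0 :=
  mul_neg_of_pos_of_neg (by positivity) ((odd_pred_of_even hp hp0).pow_neg hu)

theorem tendsto_powForcing_atBot (hp : Even p) (hp0 : p ≠ 0) :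
    Tendsto (powForcing p) atBot atBot := by
  have hodd := odd_pred_of_even hp hp0
  have hneg (u : ℝ) : -(-u) ^ (p - 1) = u ^ (p - 1) := by rw [hodd.neg_pow, neg_neg]
  have hpow : Tendsto (fun u : ℝ ↦ u ^ (p - 1)) atBot atBot := by
    simpa only [Function.comp_def, hneg] using (tendsto_neg_atTop_atBot (G := ℝ)).comp
      ((tendsto_pow_atTop hodd.pos.ne').comp tendsto_neg_atBot_atTop)
  exact hpow.const_mul_atBot (by positivity)

theorem isSolutionOn_add_pow_iff {η : ℝ → ℝ} {s : Set ℝ} :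
    IsSolutionOn (powForcing p) (fun u ↦ η u + u ^ p) s ↔
      ∀ u ∈ s, HasDerivAt η (1 / (η u + u ^ p)) u := by
  refine forall₂_congr fun u _ ↦ ⟨fun h ↦ ?_, fun h ↦ ?_⟩
  · simpa [powForcing] using h.fun_sub (hasDerivAt_pow p u)
  · simpa [powForcing] using h.fun_add (hasDerivAt_pow p u)

theorem inv_pow_lt_inv_powForcing (hp : Even p) (hp1 : 1 < p) {u : ℝ} (hu : u < 0) :
    (u ^ (p - 1))⁻¹ < (powForcing p u)⁻¹ := by
  have hpow : u ^ (p - 1) < 0 := (odd_pred_of_even hp (by lia)).pow_neg hu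
  refine (inv_lt_inv_of_neg hpow (powForcing_neg hp (by lia) hu)).2 ?_
  exact mul_lt_of_one_lt_left hpow (by exact_mod_cast hp1)

theorem inv_powForcing (hp0 : p ≠ 0) (u : ℝ) :
    (powForcing p u)⁻¹ = 1 / (p : ℝ) * u ^ (1 - (p : ℤ)) := by
  rw [powForcing, mul_inv, one_div, ← zpow_natCast u, ← zpow_neg,
    Nat.cast_pred (Nat.pos_of_ne_zero hp0), neg_sub]

/-- The quotient `F' / F ^ 2` for `F = powForcing p`: the function `g` of the lower barrier
`(g - F)⁻¹`. -/
noncomputable def powCorrection (p : ℕ) (u : ℝ) : ℝ :=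
  (p - 1) / p * (u ^ p)⁻¹

theorem sub_one_div_natCast_nonneg (hp0 : p ≠ 0) : 0 ≤ (p - 1 : ℝ) / p :=
  div_nonneg (sub_nonneg.2 (Nat.one_le_cast.2 (Nat.one_le_iff_ne_zero.2 hp0))) p.cast_nonneg

theorem powCorrection_nonneg (hp : Even p) (hp0 : p ≠ 0) (u : ℝ) : 0 ≤ powCorrection p u :=
  mul_nonneg (sub_one_div_natCast_nonneg hp0) (inv_nonneg.2 (hp.pow_nonneg u))

theorem hasDerivAt_powForcing (hp0 : p ≠ 0) {u : ℝ} (hu : u ≠ 0) :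
    HasDerivAt (powForcing p) (powCorrection p u * powForcing p u ^ 2) u := by
  refine ((hasDerivAt_pow (p - 1) u).const_mul (p : ℝ)).congr_deriv ?_
  obtain rfl | ⟨q, rfl⟩ : p = 1 ∨ ∃ q, p = q + 2 := by
    rcases p with _ | _ | q
    exacts [absurd rfl hp0, .inl rfl, .inr ⟨q, rfl⟩]
  · simp [powCorrection]
  · simp only [powForcing, powCorrection, Nat.add_one_sub_one]
    push_cast
    field_simp
    ring

theorem hasDerivAt_powCorrection (p : ℕ) {u : ℝ} (hu : u ≠ 0) :
    HasDerivAt (powCorrection p) ((p - 1) / p * (-powForcing p u / (u ^ p) ^ 2)) u :=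
  ((hasDerivAt_pow p u).fun_inv (pow_ne_zero p hu)).const_mul _

theorem powCorrection_div_powForcing_sq (hp : Even p) (hp0 : p ≠ 0) {u : ℝ} (hu : u ≠ 0) :
    powCorrection p u / powForcing p u ^ 2 = (p - 1) / p ^ 3 * |u| ^ (2 - 3 * (p : ℤ)) := by
  have heven : Even (2 - 3 * (p : ℤ)) := by grind
  have hexp : u ^ (2 - 3 * (p : ℤ)) = (u ^ p)⁻¹ * (u ^ (1 - (p : ℤ))) ^ 2 := by
    rw [← zpow_natCast u, ← zpow_neg, ← zpow_natCast, ← zpow_mul, ← zpow_add₀ hu]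
    congr 1
    push_cast
    ring
  calc powCorrection p u / powForcing p u ^ 2
      = (p - 1) / p * (u ^ p)⁻¹ * (1 / p * u ^ (1 - (p : ℤ))) ^ 2 := by
        rw [powCorrection, div_eq_mul_inv _ (powForcing p u ^ 2), ← inv_pow (powForcing p u),
          inv_powForcing hp0]
    _ = (p - 1) / p ^ 3 * |u| ^ (2 - 3 * (p : ℤ)) := by
        rw [heven.zpow_abs, hexp]
        ring

theorem IsSolutionOn.le_neg_inv_powForcing (hp : Even p) (hp0 : p ≠ 0)
    (hw : IsSolutionOn (powForcing p) w (Iio 0)) (hw0 : Tendsto w atBot (𝓝 0)) :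
    ∀ u < 0, w u ≤ -(powForcing p u)⁻¹ :=
  hw.le_neg_inv hw0 (tendsto_powForcing_atBot hp hp0) (fun _ ↦ powForcing_neg hp hp0)
    (fun _ hu ↦ hasDerivAt_powForcing hp0 hu.ne)
    (fun u _ ↦ mul_nonneg (powCorrection_nonneg hp hp0 u) (sq_nonneg _))

theorem IsSolutionOn.neg_inv_powForcing_sub_le (hp : Even p) (hp0 : p ≠ 0)
    (hw : IsSolutionOn (powForcing p) w (Iio 0)) (hw0 : Tendsto w atBot (𝓝 0)) :
    ∀ u < 0, -(powForcing p u)⁻¹ - powCorrection p u / powForcing p u ^ 2 ≤ w u :=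
  hw.neg_inv_sub_div_sq_le hw0 (tendsto_powForcing_atBot hp hp0)
    (fun _ ↦ powForcing_neg hp hp0) (fun _ hu ↦ hasDerivAt_powForcing hp0 hu.ne)
    (fun u _ ↦ powCorrection_nonneg hp hp0 u) (fun _ hu ↦ hasDerivAt_powCorrection p hu.ne)
    (fun _ hu ↦ mul_nonneg (sub_one_div_natCast_nonneg hp0)
      (div_nonneg (neg_nonneg.2 (powForcing_neg hp hp0 hu).le) (sq_nonneg _)))
    (fun _ _ ↦ le_rfl)

theorem IsSolutionOn.abs_add_inv_powForcing_le (hp : Even p) (hp0 : p ≠ 0)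
    (hw : IsSolutionOn (powForcing p) w (Iio 0)) (hw0 : Tendsto w atBot (𝓝 0)) :
    ∀ u < 0, |w u + (powForcing p u)⁻¹| ≤ (p - 1) / p ^ 3 * |u| ^ (2 - 3 * (p : ℤ)) := by
  intro u hu
  have hupper := hw.le_neg_inv_powForcing hp hp0 hw0 u hu
  have hlower := hw.neg_inv_powForcing_sub_le hp hp0 hw0 u hu
  rw [← powCorrection_div_powForcing_sq hp hp0 hu.ne, abs_of_nonpos (by linarith)]
  linarith

end PowForcing

end ReciprocalODE

open ReciprocalODE

/-- For p ≥ 2 even, dη/du = 1/(η + u^p) has a solution defined for u ≤ 0 with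
-u^p < η(u) < -u^p - K/u^{p-1} for u < 0 (some K > 1/p), with asymptotics
η(u) = -u^p - (1/p)u^{1-p} + O(u^{2-3p}) as u → -∞, and such a solution with
η(u) + u^p → 0 at -∞ is unique. -/
theorem stmt7 (p : ℕ) (hp : 2 ≤ p) (hpe : Even p) :
    ∃ (K : ℝ) (η : ℝ → ℝ), 1/(p:ℝ) < K ∧
      (∀ u ≤ (0:ℝ), HasDerivAt η (1 / (η u + u ^ p)) u) ∧
      (∀ u < (0:ℝ), -u ^ p < η u ∧ η u < -u ^ p - K / u ^ (p-1)) ∧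
      (∃ C R : ℝ, 0 < C ∧ 0 < R ∧ ∀ u ≤ -R,
        |η u - (-u ^ p - (1/(p:ℝ)) * u ^ (1 - (p:ℤ)))| ≤ C * |u| ^ (2 - 3*(p:ℤ))) ∧
      (∀ η' : ℝ → ℝ, (∀ u ≤ (0:ℝ), HasDerivAt η' (1 / (η' u + u ^ p)) u) →
        Filter.Tendsto (fun u => η' u + u ^ p) Filter.atBot (nhds 0) →
        ∀ u ≤ (0:ℝ), η' u = η u) := by
  have hp0 : p ≠ 0 := by lia
  have hp1 : (1 : ℝ) < p := by exact_mod_cast hp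
  obtain ⟨w, hw, hwpos, hw0⟩ := exists_pos_isSolutionOn_univ_tendsto_zero
    (continuous_powForcing p) (tendsto_powForcing_atBot hpe hp0)
  have hwIio : IsSolutionOn (powForcing p) w (Iio 0) := hw.mono (subset_univ _)
  have hC : (0 : ℝ) < (p - 1) / p ^ 3 := div_pos (sub_pos.2 hp1) (by positivity)
  refine ⟨1, fun u ↦ w u - u ^ p, (div_lt_one (one_pos.trans hp1)).2 hp1, ?solution, ?bounds,
    ⟨(p - 1) / p ^ 3, 1, hC, one_pos, ?asymptotics⟩, ?uniqueness⟩
  case solution =>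
    exact fun u _ ↦ isSolutionOn_add_pow_iff.1 (by simpa only [sub_add_cancel]) u (mem_univ u)
  case bounds =>
    intro u hu
    have hupper := hwIio.le_neg_inv_powForcing hpe hp0 hw0 u hu
    have hstrict := inv_pow_lt_inv_powForcing hpe hp hu
    rw [one_div]
    constructor <;> linarith [hwpos u]
  case asymptotics =>
    intro u hu
    rw [← inv_powForcing hp0, neg_sub_left, sub_neg_eq_add, sub_add_add_cancel]
    exact hwIio.abs_add_inv_powForcing_le hpe hp0 hw0 u (by linarith)
  case uniqueness =>
    exact fun η' hη' hlim u hu ↦ eq_sub_of_add_eq <|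
      (isSolutionOn_add_pow_iff.2 hη').eqOn_Iic_of_tendsto_zero (hw.mono (subset_univ _))
        (continuous_powForcing p).continuousOn (fun _ ↦ powForcing_neg hpe hp0) hlim hw0 hu
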